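/- For every a ∈ λA[[λ]] one has the identity (exp*(−a) − 𝟙) ≺ exp*(a) = − ∫_0^1 exp*(−s a) ≻ a ≺ exp*(s a) ds; equivalently, (exp*(−a) − 𝟙) ≺ exp*(a) = − Σ_{p≥0} Σ_{q≥0} ((−1)^p / (p! q! (p+q+1))) a^{*p} ≻ a ≺ a^{*q}, where the summand with p = 0 is read as a ≺ a^{*q}, the summand with q = 0 as a^{*p} ≻ a, and the summand with p = q = 0 as a. -/

import Mathlib

/-!
The identity is proved separately in each degree in `a`. Write `T p q = a^{*p} ≻ a ≺ a^{*q}`.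
Expanding `a^{*(i+1)} = a ≺ a^{*i} + a ≻ a^{*i}` and applying the dendriform axioms repeatedly gives
`a^{*(i+1)} ≺ a^{*j} = ∑_{p ≤ i} T p (i + j - p)` (`powPr_eq_sum`), so the left-hand side is, in
degree `N + 1`,
`∑_{k ≤ N} (-1)^(k+1) / ((k+1)! (N-k)!) ∑_{p ≤ k} T p (N - p)`.
Since `(k+1)! (N-k)! = (N+1)! / C(N+1, k+1)`, Pascal's rule presents the outer coefficient as a
difference `c k - c (k+1)` with `c k = (-1)^(k+1) C(N, k) / (N+1)!`, and `c (N+1) = 0`. Summation by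
parts then leaves `∑_{k ≤ N} c k T k (N - k)`, and `c k = -(-1)^k / (k! (N-k)! (N+1))`
(`degree_identity`). The remaining work is truncation: `a^{*(m+1)}` has no coefficient below
`λ^(m+1)`, so all the infinite sums are finite in each coefficient.
-/

open Finset

namespace DendSeries

variable {k A : Type*} [Field k] [CharZero k] [AddCommGroup A] [Module k A]

/-- Elements of `λA[[λ]]`: `f n` is the coefficient of `λ^(n+1)`. -/
abbrev Ser (A : Type*) := ℕ → A

/-- Cauchy-product extension of a bilinear operation `b` on `A` to `λA[[λ]]`. -/
def conv (b : A →ₗ[k] A →ₗ[k] A) (f g : Ser A) : Ser A :=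
  fun n => ∑ i ∈ Finset.range n, b (f i) (g (n - 1 - i))

/-- The associative product `f * g = f ≺ g + f ≻ g` on `λA[[λ]]`. -/
def mulS (pr su : A →ₗ[k] A →ₗ[k] A) (f g : Ser A) : Ser A :=
  conv pr f g + conv su f g

/-- `powS pr su f m = f^{*(m+1)}`. -/
def powS (pr su : A →ₗ[k] A →ₗ[k] A) (f : Ser A) (m : ℕ) : Ser A :=
  (mulS pr su f)^[m] f

/-- The series part of `exp*(f) = 𝟙 + Σ_{n≥1} f^{*n}/n!` for `f ∈ λA[[λ]]`. -/
def expS (pr su : A →ₗ[k] A →ₗ[k] A) (f : Ser A) : Ser A :=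
  fun n => ∑ m ∈ Finset.range (n + 1),
    ((Nat.factorial (m + 1) : k))⁻¹ • powS pr su f m n

/-- The summand `a^{*p} ≻ a ≺ a^{*q}` for `a ∈ λA[[λ]]`, with the conventions:
the `p = 0` summand is `a ≺ a^{*q}`, the `q = 0` summand is `a^{*p} ≻ a`,
and the `p = q = 0` summand is `a`. -/
def term (pr su : A →ₗ[k] A →ₗ[k] A) (f : Ser A) : ℕ → ℕ → Ser A
  | 0, 0 => f
  | 0, q + 1 => conv pr f (powS pr su f q)
  | p + 1, 0 => conv su (powS pr su f p) f
  | p + 1, q + 1 => conv su (powS pr su f p) (conv pr f (powS pr su f q))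

/-! ### The dendriform structure on series -/

/-- `conv b` as a bilinear map. -/
def convL (b : A →ₗ[k] A →ₗ[k] A) : Ser A →ₗ[k] Ser A →ₗ[k] Ser A :=
  LinearMap.mk₂ k (conv b)
    (fun f f' g => by funext n; simp [conv, Finset.sum_add_distrib])
    (fun c f g => by funext n; simp [conv, Finset.smul_sum])
    (fun f g g' => by funext n; simp [conv, Finset.sum_add_distrib])
    (fun c f g => by funext n; simp [conv, Finset.smul_sum])

omit [CharZero k] in
lemma convL_apply (b : A →ₗ[k] A →ₗ[k] A) (f g : Ser A) : convL b f g = conv b f g := rfl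

omit [CharZero k] in
lemma conv_add_left (b : A →ₗ[k] A →ₗ[k] A) (f f' g : Ser A) :
    conv b (f + f') g = conv b f g + conv b f' g := by
  simp only [← convL_apply, map_add, LinearMap.add_apply]

omit [CharZero k] in
lemma conv_add_right (b : A →ₗ[k] A →ₗ[k] A) (f g g' : Ser A) :
    conv b f (g + g') = conv b f g + conv b f g' := by
  simp only [← convL_apply, map_add]

omit [CharZero k] in
lemma conv_add_op (b c : A →ₗ[k] A →ₗ[k] A) (f g : Ser A) :
    conv (b + c) f g = conv b f g + conv c f g := by
  funext n; simp [conv, Finset.sum_add_distrib]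

omit [CharZero k] in
/-- A mixed associativity law between operations on `A` passes to their Cauchy products. -/
lemma conv_conv {b c d e : A →ₗ[k] A →ₗ[k] A}
    (H : ∀ x y z : A, b (c x y) z = d x (e y z)) (f g h : Ser A) :
    conv b (conv c f g) h = conv d f (conv e g h) := by
  funext n
  simp only [conv, map_sum, LinearMap.sum_apply, H, Finset.sum_sigma']
  refine Finset.sum_bij' (fun x _ => ⟨x.2, x.1 - 1 - x.2⟩) (fun x _ => ⟨x.1 + 1 + x.2, x.1⟩)
    ?_ ?_ ?_ ?_ ?_
  · rintro ⟨i, j⟩ hx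
    simp only [Finset.mem_sigma, Finset.mem_range] at hx ⊢
    omega
  · rintro ⟨i, j⟩ hx
    simp only [Finset.mem_sigma, Finset.mem_range] at hx ⊢
    omega
  · rintro ⟨i, j⟩ hx
    simp only [Finset.mem_sigma, Finset.mem_range] at hx
    have : j + 1 + (i - 1 - j) = i := by omega
    simp [this]
  · rintro ⟨i, j⟩ hx
    simp
  · rintro ⟨i, j⟩ hx
    simp only [Finset.mem_sigma, Finset.mem_range] at hx
    have : n - 1 - j - 1 - (i - 1 - j) = n - 1 - i := by omega
    simp [this]

section Dendriform

variable {pr su : A →ₗ[k] A →ₗ[k] A}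

omit [CharZero k] in
lemma mulS_eq (f g : Ser A) : mulS pr su f g = conv (pr + su) f g := (conv_add_op _ _ _ _).symm

omit [CharZero k] in
lemma powS_succ (f : Ser A) (m : ℕ) : powS pr su f (m + 1) = mulS pr su f (powS pr su f m) :=
  Function.iterate_succ_apply' _ _ _

omit [CharZero k] in
lemma powS_zero (f : Ser A) : powS pr su f 0 = f := rfl

omit [CharZero k] in
lemma powS_neg (f : Ser A) (m : ℕ) :
    powS pr su (-f) m = (-1 : k) ^ (m + 1) • powS pr su f m := by
  induction m with
  | zero => simp [powS_zero]
  | succ m ih =>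
    rw [powS_succ, powS_succ, ih, mulS_eq, mulS_eq, ← convL_apply, ← convL_apply]
    simp [pow_succ]

variable (ax1 : ∀ a b c : A, pr (pr a b) c = pr a (pr b c + su b c))
  (ax2 : ∀ a b c : A, pr (su a b) c = su a (pr b c))
  (ax3 : ∀ a b c : A, su a (su b c) = su (pr a b + su a b) c)

omit [CharZero k] in
include ax1 in
lemma conv_ax1 (f g h : Ser A) : conv pr (conv pr f g) h = conv pr f (mulS pr su g h) := by
  rw [mulS_eq]
  exact conv_conv (by simpa using ax1) f g h

omit [CharZero k] in
include ax2 in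
lemma conv_ax2 (f g h : Ser A) : conv pr (conv su f g) h = conv su f (conv pr g h) :=
  conv_conv ax2 f g h

omit [CharZero k] in
include ax3 in
lemma conv_ax3 (f g h : Ser A) : conv su f (conv su g h) = conv su (mulS pr su f g) h := by
  rw [mulS_eq]
  exact (conv_conv (fun x y z => by simpa using (ax3 x y z).symm) f g h).symm

omit [CharZero k] in
include ax1 ax2 ax3 in
lemma mulS_assoc (f g h : Ser A) :
    mulS pr su (mulS pr su f g) h = mulS pr su f (mulS pr su g h) := by
  rw [mulS_eq, mulS_eq, mulS_eq, mulS_eq]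
  refine conv_conv (fun x y z => ?_) f g h
  have h1 := ax1 x y z
  have h2 := ax2 x y z
  have h3 := ax3 x y z
  simp only [map_add, LinearMap.add_apply] at *
  rw [h1, h2, h3]
  abel

omit [CharZero k] in
include ax1 ax2 ax3 in
lemma mulS_powS (f : Ser A) (i j : ℕ) :
    mulS pr su (powS pr su f i) (powS pr su f j) = powS pr su f (i + j + 1) := by
  induction i with
  | zero => rw [powS_zero, zero_add, powS_succ]
  | succ i ih =>
    rw [powS_succ, mulS_assoc ax1 ax2 ax3, ih, ← powS_succ]
    congr 1
    omega

/-! ### Expansion of `a^{*(i+1)} ≺ a^{*j}` -/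

/-- `powPr pr su f i j = f^{*(i+1)} ≺ f^{*j}`, where `f^{*0} = 𝟙` and `x ≺ 𝟙 = x`. -/
def powPr (pr su : A →ₗ[k] A →ₗ[k] A) (f : Ser A) (i : ℕ) : ℕ → Ser A
  | 0 => powS pr su f i
  | j + 1 => conv pr (powS pr su f i) (powS pr su f j)

omit [CharZero k] in
lemma powPr_zero_left (f : Ser A) (j : ℕ) : powPr pr su f 0 j = term pr su f 0 j := by
  cases j <;> rfl

omit [CharZero k] in
include ax1 ax2 ax3 in
lemma powPr_succ (f : Ser A) (i j : ℕ) :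
    powPr pr su f (i + 1) j = term pr su f 0 (i + 1 + j) + conv su f (powPr pr su f i j) := by
  cases j with
  | zero => simp only [powPr, powS_succ]; rfl
  | succ j =>
    simp only [powPr]
    rw [powS_succ, mulS, conv_add_left, conv_ax1 ax1, conv_ax2 ax2, mulS_powS ax1 ax2 ax3,
      show i + 1 + (j + 1) = i + j + 1 + 1 by omega]
    rfl

omit [CharZero k] in
include ax3 in
lemma conv_term (f : Ser A) (p q : ℕ) :
    conv su f (term pr su f p q) = term pr su f (p + 1) q := by
  cases p with
  | zero => cases q <;> rfl
  | succ p => cases q <;> simp only [term] <;> rw [conv_ax3 ax3, ← powS_succ]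

omit [CharZero k] in
include ax1 ax2 ax3 in
lemma powPr_eq_sum (f : Ser A) (i j : ℕ) :
    powPr pr su f i j = ∑ p ∈ Finset.range (i + 1), term pr su f p (i + j - p) := by
  induction i with
  | zero => simp [powPr_zero_left]
  | succ i ih =>
    rw [powPr_succ ax1 ax2 ax3, ih, Finset.sum_range_succ' _ (i + 1), ← convL_apply, map_sum,
      add_comm]
    simp only [convL_apply, conv_term ax3]
    congr 1
    refine Finset.sum_congr rfl fun p _ => ?_
    congr 1
    omega

end Dendriform

/-! ### The identity in a fixed degree -/

omit [CharZero k] in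
lemma sum_by_parts (c : ℕ → k) (x : ℕ → A) (M : ℕ) :
    ∑ i ∈ Finset.range M, (c i - c (i + 1)) • ∑ p ∈ Finset.range (i + 1), x p
      = ∑ i ∈ Finset.range M, c i • x i - c M • ∑ p ∈ Finset.range M, x p := by
  induction M with
  | zero => simp
  | succ M ih =>
    rw [Finset.sum_range_succ, ih, Finset.sum_range_succ _ M, Finset.sum_range_succ _ M]
    module

/-- The degree `N + 1` part of the identity, `x p` standing for `a^{*p} ≻ a ≺ a^{*(N-p)}`. -/
lemma degree_identity (x : ℕ → A) (N : ℕ) :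
    ∑ i ∈ Finset.range (N + 1),
      ((-1 : k) ^ (i + 1) * ((i + 1).factorial : k)⁻¹ * ((N - i).factorial : k)⁻¹) •
        ∑ p ∈ Finset.range (i + 1), x p
      = -∑ i ∈ Finset.range (N + 1),
          ((-1 : k) ^ i / ((i.factorial : k) * ((N - i).factorial : k) * (N + 1))) • x i := by
  have key := sum_by_parts
    (fun i => (-1 : k) ^ (i + 1) * (N.choose i : k) / ((N + 1).factorial : k)) x (N + 1)
  -- the boundary term vanishes because `C(N, N+1) = 0`
  simp only [Nat.choose_succ_self, Nat.cast_zero, mul_zero, zero_div, zero_smul, sub_zero] at key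
  rw [← Finset.sum_neg_distrib]
  have hf : ∀ m : ℕ, (m.factorial : k) ≠ 0 := fun m => Nat.cast_ne_zero.2 m.factorial_ne_zero
  have hN : (N : k) + 1 ≠ 0 := Nat.cast_add_one_ne_zero N
  refine Eq.trans (Finset.sum_congr rfl fun i hi => ?_)
    (key.trans (Finset.sum_congr rfl fun i hi => ?_))
  · have hi' : i ≤ N := Nat.lt_succ_iff.1 (Finset.mem_range.1 hi)
    congr 1
    have h1 : (((N + 1).choose (i + 1) : ℕ) : k) * ((i + 1).factorial : k) *
        ((N - i).factorial : k) = ((N + 1).factorial : k) := by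
      have := Nat.choose_mul_factorial_mul_factorial (Nat.succ_le_succ hi')
      rw [Nat.succ_sub_succ] at this
      exact_mod_cast this
    rw [Nat.choose_succ_succ, Nat.cast_add] at h1
    have e1 := hf (i + 1)
    have e2 := hf (N - i)
    have e3 := hf (N + 1)
    generalize ((i + 1).factorial : k) = u at *
    generalize ((N - i).factorial : k) = v at *
    generalize ((N + 1).factorial : k) = w at *
    field_simp
    rw [← h1]
    ring
  · have hi' : i ≤ N := Nat.lt_succ_iff.1 (Finset.mem_range.1 hi)
    rw [← neg_smul]
    congr 1
    have h1 : ((N.choose i : ℕ) : k) * (i.factorial : k) *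
        ((N - i).factorial : k) = (N.factorial : k) := by
      exact_mod_cast Nat.choose_mul_factorial_mul_factorial hi'
    have e1 := hf i
    have e2 := hf (N - i)
    have e3 := hf N
    rw [Nat.factorial_succ]
    push_cast
    rw [← h1] at e3 ⊢
    have e4 : (N.choose i : k) ≠ 0 := fun h => e3 (by rw [h]; ring)
    field_simp
    ring

/-! ### Truncation -/

omit [CharZero k] in
lemma conv_eq_zero (b : A →ₗ[k] A →ₗ[k] A) {f g : Ser A} {r s n : ℕ}
    (hf : ∀ i < r, f i = 0) (hg : ∀ i < s, g i = 0) (hn : n < r + s + 1) :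
    conv b f g n = 0 := by
  refine Finset.sum_eq_zero fun i hi => ?_
  have hi := Finset.mem_range.1 hi
  by_cases h : i < r
  · simp [hf i h]
  · rw [hg (n - 1 - i) (by omega), map_zero]

omit [CharZero k] in
lemma conv_congr (b : A →ₗ[k] A →ₗ[k] A) {f f' g g' : Ser A} {n : ℕ}
    (hf : ∀ i ≤ n, f i = f' i) (hg : ∀ i ≤ n, g i = g' i) :
    conv b f g n = conv b f' g' n := by
  refine Finset.sum_congr rfl fun i hi => ?_
  have hi := Finset.mem_range.1 hi
  rw [hf i (by omega), hg _ (by omega)]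

section Truncation

variable (pr su : A →ₗ[k] A →ₗ[k] A)

omit [CharZero k] in
lemma powS_eq_zero (f : Ser A) (m : ℕ) : ∀ i < m, powS pr su f m i = 0 := by
  induction m with
  | zero => simp
  | succ m ih =>
    intro i hi
    rw [powS_succ, mulS_eq]
    exact conv_eq_zero _ (r := 0) (by simp) ih (by omega)

omit [CharZero k] in
/-- Up to the coefficient of index `n`, the exponential is a fixed finite sum of powers. -/
lemma expS_eq (f : Ser A) {i n : ℕ} (hi : i ≤ n) :
    expS pr su f i =
      (∑ m ∈ Finset.range (n + 1), ((m + 1).factorial : k)⁻¹ • powS pr su f m) i := by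
  simp only [expS, Finset.sum_apply, Pi.smul_apply]
  refine Finset.sum_subset (Finset.range_mono (by omega)) fun m _ hm => ?_
  rw [Finset.mem_range] at hm
  rw [powS_eq_zero pr su f m i (by omega), smul_zero]

omit [CharZero k] in
/-- `(exp*(-f) - 𝟙) ≺ exp*(f)` as a double sum over the powers of `f`. -/
lemma lhs_eq (f : Ser A) (n : ℕ) :
    (expS pr su (-f) + conv pr (expS pr su (-f)) (expS pr su f)) n
      = ∑ i ∈ Finset.range (n + 1), ∑ j ∈ Finset.range (n + 1 - i),
          ((-1 : k) ^ (i + 1) * ((i + 1).factorial : k)⁻¹ * (j.factorial : k)⁻¹) •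
            powPr pr su f i j n := by
  have h := conv_congr pr (n := n)
    (f' := ∑ m ∈ Finset.range (n + 1), ((m + 1).factorial : k)⁻¹ • powS pr su (-f) m)
    (g' := ∑ m ∈ Finset.range (n + 1), ((m + 1).factorial : k)⁻¹ • powS pr su f m)
    (fun i hi => expS_eq pr su (-f) hi) (fun i hi => expS_eq pr su f hi)
  rw [Pi.add_apply, h, expS_eq pr su (-f) le_rfl, ← convL_apply, map_sum (convL pr),
    LinearMap.sum_apply]
  simp only [map_sum, map_smul, LinearMap.smul_apply, powS_neg,
    Finset.sum_apply, Pi.smul_apply, convL_apply]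
  rw [← Finset.sum_add_distrib]
  refine Finset.sum_congr rfl fun i hi => ?_
  have hi := Finset.mem_range.1 hi
  rw [show n + 1 - i = n - i + 1 by omega, Finset.sum_range_succ' _ (n - i), add_comm]
  congr 1
  · symm
    refine Eq.trans (Finset.sum_congr rfl fun j _ => ?_)
      (Finset.sum_subset (Finset.range_mono (by omega : n - i ≤ n + 1)) fun j _ hj => ?_)
    · simp only [powPr, smul_smul]
      congr 1
      ring
    · rw [Finset.mem_range] at hj
      rw [conv_eq_zero pr (powS_eq_zero pr su f i) (powS_eq_zero pr su f j) (by omega)]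
      simp only [smul_zero]
  · simp [powPr, smul_smul, mul_comm]

end Truncation

/-- For every `a ∈ λA[[λ]]`, one has
`(exp*(−a) − 𝟙) ≺ exp*(a) = − Σ_{p,q≥0} ((−1)^p/(p! q! (p+q+1))) a^{*p} ≻ a ≺ a^{*q}`
(the coefficientwise-finite form of
`(exp*(−a) − 𝟙) ≺ exp*(a) = − ∫₀¹ exp*(−s a) ≻ a ≺ exp*(s a) ds`). -/
theorem key_to_Fer {k A : Type*} [Field k] [CharZero k]
    [AddCommGroup A] [Module k A]
    (pr su : A →ₗ[k] A →ₗ[k] A)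
    (ax1 : ∀ a b c : A, pr (pr a b) c = pr a (pr b c + su b c))
    (ax2 : ∀ a b c : A, pr (su a b) c = su a (pr b c))
    (ax3 : ∀ a b c : A, su a (su b c) = su (pr a b + su a b) c)
    (f : Ser A) :
    ∀ n : ℕ,
      (expS pr su (-f) + conv pr (expS pr su (-f)) (expS pr su f)) n
        = -(∑ p ∈ Finset.range (n + 1), ∑ q ∈ Finset.range (n + 1 - p),
            ((((-1 : ℚ) ^ p /
                ((Nat.factorial p : ℚ) * (Nat.factorial q) * (p + q + 1))) : ℚ) : k) •
              term pr su f p q n) := by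
  intro n
  rw [lhs_eq, ← Finset.sum_range_diag_flip, ← Finset.sum_range_diag_flip,
    ← Finset.sum_neg_distrib]
  refine Finset.sum_congr rfl fun N _ => ?_
  have key := degree_identity (k := k) (fun p => term pr su f p (N - p) n) N
  refine Eq.trans (Finset.sum_congr rfl fun i hi => ?_)
    (key.trans (congrArg _ (Finset.sum_congr rfl fun i hi => ?_)))
  · have hi := Finset.mem_range.1 hi
    rw [powPr_eq_sum ax1 ax2 ax3, Finset.sum_apply, show i + (N - i) = N by omega]
  · have hi := Finset.mem_range.1 hi
    congr 1
    rw [Nat.cast_sub (by omega : i ≤ N)]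
    push_cast
    congr 2
    ring

end DendSeries
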